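/- With γ₃ = ∑_{x=1}^∞ [ (1/x³ + 3·ln x / x² + 3·(ln x)² / x) − ((ln(x+1))³ − (ln x)³) ] and γ₃′ = ∑_{x=2}^∞ [ ((ln x)³ − (ln(x−1))³) − (3·(ln x)² / x − 3·ln x / x² + 1/x³) ], one has γ₃ + γ₃′ = 1 + 6·(∑_{x=1}^∞ ln x / x²). -/

import Mathlib

open Real

lemma aux_summ : Summable (fun n : ℕ => (Real.log ((n : ℝ) + 1) + 2) ^ 2 / ((n : ℝ) + 1) ^ 2) := by
  have h0 : Summable (fun n : ℕ => 36 * (1 / ((n : ℝ) + 1) ^ (3 / 2 : ℝ))) := by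
    have h1 : Summable (fun n : ℕ => 1 / (n : ℝ) ^ (3 / 2 : ℝ)) :=
      Real.summable_one_div_nat_rpow.mpr (by norm_num)
    have h2 := (summable_nat_add_iff 1).mpr h1
    refine Summable.mul_left 36 ?_
    simpa using h2
  refine Summable.of_nonneg_of_le (fun n => by positivity) (fun n => ?_) h0
  have hn : (0 : ℝ) ≤ n := Nat.cast_nonneg n
  generalize hy : (n : ℝ) + 1 = y
  have hy1 : 1 ≤ y := by linarith
  have hy0 : 0 < y := by linarith
  have hl := Real.log_le_rpow_div hy0.le (show (0 : ℝ) < 1 / 4 by norm_num)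
  have hl0 := Real.log_nonneg hy1
  have h1 : 1 ≤ y ^ (1 / 4 : ℝ) := Real.one_le_rpow hy1 (by norm_num)
  have h2 : Real.log y + 2 ≤ 6 * y ^ (1 / 4 : ℝ) := by linarith
  have h3 : (Real.log y + 2) ^ 2 ≤ 36 * y ^ (1 / 2 : ℝ) := by
    have e : y ^ (1 / 2 : ℝ) = y ^ (1 / 4 : ℝ) * y ^ (1 / 4 : ℝ) := by
      rw [← Real.rpow_add hy0]; norm_num
    rw [e]; nlinarith
  have e2 : y ^ 2 = y ^ (1 / 2 : ℝ) * y ^ (3 / 2 : ℝ) := by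
    rw [← Real.rpow_add hy0, ← Real.rpow_natCast]; norm_num
  have p1 : 0 < y ^ (1 / 2 : ℝ) := Real.rpow_pos_of_pos hy0 _
  have p2 : 0 < y ^ (3 / 2 : ℝ) := Real.rpow_pos_of_pos hy0 _
  rw [e2, div_le_iff₀ (by positivity)]
  calc _ ≤ 36 * y ^ (1 / 2 : ℝ) := h3
    _ = _ := by field_simp

lemma aux_d (y : ℝ) (hy : 1 ≤ y) :
    1 / (y + 1) ≤ Real.log (y + 1) - Real.log y ∧ Real.log (y + 1) - Real.log y ≤ 1 / y := by
  have hy0 : 0 < y := by linarith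
  rw [← Real.log_div (by positivity) (by positivity)]
  constructor
  · have := Real.one_sub_inv_le_log_of_pos (show 0 < (y + 1) / y by positivity)
    refine le_trans (le_of_eq ?_) this
    field_simp; ring
  · have := Real.log_le_sub_one_of_pos (show 0 < (y + 1) / y by positivity)
    refine le_trans this (le_of_eq ?_)
    field_simp; ring

lemma aux_inv (y : ℝ) (hy : 1 ≤ y) :
    0 < 1 / (y + 1) ∧ 1 / y - 1 / (y + 1) ≤ (1 / y) ^ 2 ∧ 0 < 1 / y ∧ 1 / y ≤ 1 := by
  have hy0 : 0 < y := by linarith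
  refine ⟨by positivity, ?_, by positivity, by rw [div_le_one hy0]; exact hy⟩
  have : (1 / y) ^ 2 - (1 / y - 1 / (y + 1)) = 1 / (y ^ 2 * (y + 1)) := by field_simp; ring
  have : 0 < 1 / (y ^ 2 * (y + 1)) := by positivity
  linarith

/-- Abstract estimate: `p, q` both in `[0, v]`, with `|p - q| ≤ v²`. -/
lemma aux_alg (L p q v s : ℝ) (hs : |s| = 1) (hL : 0 ≤ L) (hp : 0 ≤ p) (hpq : p ≤ q) (hq : q ≤ v) (hv : v ≤ 1)
    (hd : q - p ≤ v ^ 2) :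
    |3 * L ^ 2 * (q - p) + s * (3 * L * (q ^ 2 - p ^ 2)) + (q ^ 3 - p ^ 3)| ≤
      3 * ((L + 1) ^ 2 * v ^ 2) := by
  have hv0 : 0 ≤ v := by linarith
  have a1 : 0 ≤ q - p := by linarith
  have b1 : 3 * L ^ 2 * (q - p) ≤ 3 * L ^ 2 * v ^ 2 := by gcongr
  have b2 : q ^ 2 - p ^ 2 ≤ 2 * v ^ 2 := by
    have : q ^ 2 - p ^ 2 = (q - p) * (q + p) := by ring
    rw [this]
    calc (q - p) * (q + p) ≤ v ^ 2 * 2 :=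
        mul_le_mul hd (by linarith) (by linarith) (by positivity)
      _ = _ := by ring
  have b2' : 0 ≤ q ^ 2 - p ^ 2 := by nlinarith
  have b3 : q ^ 3 - p ^ 3 ≤ 3 * v ^ 2 := by
    have : q ^ 3 - p ^ 3 = (q - p) * (q ^ 2 + q * p + p ^ 2) := by ring
    rw [this]
    calc (q - p) * (q ^ 2 + q * p + p ^ 2) ≤ v ^ 2 * 3 :=
        mul_le_mul hd (by nlinarith) (by nlinarith) (by positivity)
      _ = _ := by ring
  have b3' : 0 ≤ q ^ 3 - p ^ 3 := by
    have := pow_le_pow_left₀ hp hpq 3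
    linarith
  have c : 3 * L * (q ^ 2 - p ^ 2) ≤ 3 * L * (2 * v ^ 2) := by gcongr
  refine (abs_add_three _ _ _).trans ?_
  rw [abs_mul s, hs, abs_of_nonneg (by positivity : 0 ≤ 3 * L ^ 2 * (q - p)),
    abs_of_nonneg (by positivity : 0 ≤ 3 * L * (q ^ 2 - p ^ 2)), abs_of_nonneg b3']
  linarith

lemma summ_a : Summable (fun x : ℕ =>
      ((1 / ((x : ℝ) + 1) ^ 3 + 3 * Real.log ((x : ℝ) + 1) / ((x : ℝ) + 1) ^ 2 +
          3 * (Real.log ((x : ℝ) + 1)) ^ 2 / ((x : ℝ) + 1)) -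
        ((Real.log ((x : ℝ) + 2)) ^ 3 - (Real.log ((x : ℝ) + 1)) ^ 3))) := by
  refine Summable.of_norm_bounded (aux_summ.mul_left 3) (fun n => ?_)
  have hn : (0 : ℝ) ≤ n := Nat.cast_nonneg n
  rw [show (n : ℝ) + 2 = (n + 1) + 1 by ring]
  generalize hy : (n : ℝ) + 1 = y
  have hy1 : 1 ≤ y := by linarith
  obtain ⟨d1, d2⟩ := aux_d y hy1
  obtain ⟨i1, i2, i3, i4⟩ := aux_inv y hy1
  have hL := Real.log_nonneg hy1
  have := aux_alg (Real.log y) (Real.log (y + 1) - Real.log y) (1 / y) (1 / y) 1 (by simp) hL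
    (by linarith) d2 le_rfl i4 (by linarith)
  rw [Real.norm_eq_abs]
  refine (le_of_eq ?_).trans (this.trans ?_)
  · congr 1; ring
  · rw [div_eq_mul_one_div _ (y ^ 2), ← one_div_pow]
    gcongr; norm_num

lemma summ_b : Summable (fun x : ℕ =>
      (((Real.log ((x : ℝ) + 2)) ^ 3 - (Real.log ((x : ℝ) + 1)) ^ 3) -
        (3 * (Real.log ((x : ℝ) + 2)) ^ 2 / ((x : ℝ) + 2) -
          3 * Real.log ((x : ℝ) + 2) / ((x : ℝ) + 2) ^ 2 + 1 / ((x : ℝ) + 2) ^ 3))) := by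
  refine Summable.of_norm_bounded (aux_summ.mul_left 3) (fun n => ?_)
  have hn : (0 : ℝ) ≤ n := Nat.cast_nonneg n
  rw [show (n : ℝ) + 2 = (n + 1) + 1 by ring]
  generalize hy : (n : ℝ) + 1 = y
  have hy1 : 1 ≤ y := by linarith
  obtain ⟨d1, d2⟩ := aux_d y hy1
  obtain ⟨i1, i2, i3, i4⟩ := aux_inv y hy1
  have hL := Real.log_nonneg (show 1 ≤ y + 1 by linarith)
  have := aux_alg (Real.log (y + 1)) (1 / (y + 1)) (Real.log (y + 1) - Real.log y) (1 / y) (-1)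
    (by simp) hL i1.le d1 d2 i4 (by linarith)
  rw [Real.norm_eq_abs]
  refine (le_of_eq ?_).trans (this.trans ?_)
  · congr 1
    generalize y + 1 = z
    ring
  · rw [div_eq_mul_one_div _ (y ^ 2), ← one_div_pow]
    gcongr 3 * (?_ ^ 2 * _)
    linarith

lemma summ_c : Summable (fun x : ℕ => Real.log ((x : ℝ) + 1) / ((x : ℝ) + 1) ^ 2) := by
  have hl (n : ℕ) : 0 ≤ Real.log ((n : ℝ) + 1) :=
    Real.log_nonneg (by have : (0 : ℝ) ≤ n := Nat.cast_nonneg n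
                        linarith)
  refine Summable.of_nonneg_of_le (fun n => ?_) (fun n => ?_) aux_summ
  · have := hl n
    positivity
  · have := hl n
    gcongr
    nlinarith

/-- The backward derivative at `n + 1`. -/
noncomputable def auxH (n : ℕ) : ℝ :=
  3 * (Real.log ((n : ℝ) + 1)) ^ 2 / ((n : ℝ) + 1) -
          3 * Real.log ((n : ℝ) + 1) / ((n : ℝ) + 1) ^ 2 + 1 / ((n : ℝ) + 1) ^ 3

lemma auxH_tendsto : Filter.Tendsto auxH Filter.atTop (nhds 0) := by
  have ht : Filter.Tendsto (fun n : ℕ => (n : ℝ) + 1) Filter.atTop Filter.atTop :=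
    Filter.tendsto_atTop_add_const_right _ _ tendsto_natCast_atTop_atTop
  have h (k : ℕ) := (Real.tendsto_pow_log_div_mul_add_atTop 1 0 k one_ne_zero).comp ht
  have h2 := h 2
  have h1 := h 1
  have h0 := h 0
  have := ((h2.const_mul 3).sub ((h1.mul h0).const_mul 3)).add (h0.mul (h0.mul h0))
  simp only [mul_zero, sub_zero, add_zero] at this
  refine this.congr (fun n => ?_)
  simp only [Function.comp, auxH]
  have : (n : ℝ) + 1 ≠ 0 := by positivity
  field_simp
  try ring


/-- γ₃ + γ₃′ = 1 + 6·(∑_{x=1}^∞ ln x / x²). -/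
theorem gamma_three_add_gamma_three_prime (γ₃ γ₃' : ℝ)
    (hγ₃ : γ₃ = ∑' x : ℕ,
      ((1 / ((x : ℝ) + 1) ^ 3 + 3 * Real.log ((x : ℝ) + 1) / ((x : ℝ) + 1) ^ 2 +
          3 * (Real.log ((x : ℝ) + 1)) ^ 2 / ((x : ℝ) + 1)) -
        ((Real.log ((x : ℝ) + 2)) ^ 3 - (Real.log ((x : ℝ) + 1)) ^ 3)))
    (hγ₃' : γ₃' = ∑' x : ℕ,
      (((Real.log ((x : ℝ) + 2)) ^ 3 - (Real.log ((x : ℝ) + 1)) ^ 3) -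
        (3 * (Real.log ((x : ℝ) + 2)) ^ 2 / ((x : ℝ) + 2) -
          3 * Real.log ((x : ℝ) + 2) / ((x : ℝ) + 2) ^ 2 + 1 / ((x : ℝ) + 2) ^ 3))) :
    γ₃ + γ₃' = 1 + 6 * (∑' x : ℕ, Real.log ((x : ℝ) + 1) / ((x : ℝ) + 1) ^ 2) := by
  have ha := summ_a
  have hb := summ_b
  have hc := summ_c
  rw [hγ₃, hγ₃', ← ha.tsum_add hb]
  have hab := ha.add hb
  have hd : Summable (fun n : ℕ => auxH n - auxH (n + 1)) := by
    refine (hab.sub (hc.mul_left 6)).congr (fun n => ?_)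
    simp only [auxH]
    push_cast
    rw [show (n : ℝ) + 1 + 1 = n + 2 by ring]
    ring
  have hsum : ∑' n : ℕ, (auxH n - auxH (n + 1)) = 1 := by
    have h1 := hd.hasSum.tendsto_sum_nat
    simp only [Finset.sum_range_sub'] at h1
    have h2 := auxH_tendsto.const_sub (auxH 0)
    have h3 := tendsto_nhds_unique h1 h2
    rw [h3]
    simp [auxH]
  have key := hd.tsum_add (hc.mul_left 6)
  rw [hsum, tsum_mul_left] at key
  rw [← key]
  refine tsum_congr (fun n => ?_)
  simp only [auxH]
  push_cast
  rw [show (n : ℝ) + 1 + 1 = n + 2 by ring]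
  ring
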